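/- arXiv:1209.0940 — 6 statements merged into one kernel-verified Lean document; each statement's English description precedes it below -/
import Mathlib

section
/- Let C be a category, and let f : X ⟶ Y be a morphism of C. Then the functor Over.map f : Over X ⥤ Over Y (post-composition with f) preserves limits of every shape given by a (small) connected category. -/
open CategoryTheory CategoryTheory.Limits

/-- For a morphism `f : X ⟶ Y` in a category `C`, the functor
`Over.map f : Over X ⥤ Over Y` preserves limits of every shape given by a
small connected category. -/
theorem over_map_preserves_connected_limits
    {C : Type u} [Category.{v} C] {X Y : C} (f : X ⟶ Y)
    (J : Type w) [SmallCategory J] [IsConnected J] :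
    Nonempty (PreservesLimitsOfShape J (Over.map f)) := by
  have h : PreservesLimitsOfShape J (Over.map f ⋙ Over.forget Y) :=
    preservesLimitsOfShape_of_natIso (F := Over.forget X) (Over.mapForget f).symm
  refine ⟨⟨fun {K} => ?_⟩⟩
  exact preservesLimit_of_reflects_of_preserves _ (Over.forget Y)
end

section
/- Let C be a category with pullbacks, and let I ⟵ D ⟶ A ⟶ J be a polynomial, i.e. morphisms n : D ⟶ I, d : D ⟶ A, a : A ⟶ J of C. Suppose Π : Over D ⥤ Over A is a functor equipped with an adjunction Over.pullback d ⊣ Π. Then the extension of the polynomial, namely the composite functor (Over.pullback n) ⋙ Π ⋙ (Over.map a) : Over I ⥤ Over J, preserves limits of every shape given by a (small) connected category. -/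
open CategoryTheory CategoryTheory.Limits

/-- The extension `Σ_a ∘ Π_d ∘ Δ_n : Over I ⥤ Over J` of a polynomial
`I ⟵ D ⟶ A ⟶ J` in a category with pullbacks (where `Π` is a right adjoint of
the base-change functor `Δ_d = Over.pullback d`) preserves limits of every
shape given by a small connected category. -/
theorem polynomial_extension_preserves_connected_limits
    {C : Type u} [Category.{v} C] [HasPullbacks C]
    {I D A J : C} (n : D ⟶ I) (d : D ⟶ A) (a : A ⟶ J)
    (Pi : Over D ⥤ Over A) (adj : Over.pullback d ⊣ Pi)
    (K : Type w) [SmallCategory K] [IsConnected K] :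
    Nonempty (PreservesLimitsOfShape K
      (Over.pullback n ⋙ Pi ⋙ Over.map a)) := by
  have h1 : PreservesLimitsOfShape K (Over.pullback n) :=
    (Over.mapPullbackAdj n).rightAdjoint_preservesLimits.preservesLimitsOfShape
  have h2 : PreservesLimitsOfShape K Pi :=
    adj.rightAdjoint_preservesLimits.preservesLimitsOfShape
  have h3 : PreservesLimitsOfShape K (Over.map a ⋙ Over.forget J) :=
    preservesLimitsOfShape_of_natIso (Over.mapForget a).symm
  have h4 : PreservesLimitsOfShape K (Over.map a) :=
    preservesLimitsOfShape_of_reflects_of_preserves (Over.map a) (Over.forget J)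
  exact ⟨inferInstance⟩
end

section
/- Let I and J be types and let P : Over I ⥤ Over J be a functor between the slice categories of the category of types that preserves limits of every shape given by a (small) connected category. Then P is polynomial: there exist types D and A, functions n : D → I, d : D → A, a : A → J, a functor Π : Over D ⥤ Over A together with an adjunction Over.pullback d ⊣ Π, and a natural isomorphism P ≅ (Over.pullback n) ⋙ Π ⋙ (Over.map a). -/
open CategoryTheory CategoryTheory.Limits

namespace PolyAux
universe u

/-! ### Generators and the adjoint functor theorem -/

theorem over_wellPowered (I : Type u) : WellPowered.{u} (Over I) := by
  let G : I → Over I := fun i => Over.mk (Y := PUnit.{u+1}) (↾ fun _ => i)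
  have h : (ObjectProperty.ofObj G).IsSeparating := by
    intro X Y f g h
    ext x
    have := h (G (X.hom x)) (ObjectProperty.ofObj_apply G _)
      (Over.homMk (↾ fun _ => x) (by ext; rfl))
    exact ConcreteCategory.congr_hom (congrArg (fun k => k.left) this) PUnit.unit
  exact wellPowered_of_isDetecting h.isDetecting

theorem over_coseparator (I : Type u) :
    IsCoseparator (Over.mk (Y := ULift.{u} Prop × I) (↾ Prod.snd)) := by
  rw [isCoseparator_def]
  intro X Y f g h
  ext x
  have := h (Over.homMk (↾ fun y => (ULift.up (y = f.left x), Y.hom y)) (by ext; rfl))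
  have := ConcreteCategory.congr_hom (congrArg Over.Hom.left this) x
  have := congrArg (fun z : ULift.{u} Prop × I => z.1.down) this
  have h2 : (f.left x = f.left x) = (g.left x = f.left x) := this
  exact (h2.mp rfl).symm

theorem over_isRightAdjoint {I A : Type u} (L : Over I ⥤ Over A) [PreservesLimits L] :
    L.IsRightAdjoint := by
  have := over_wellPowered I
  exact isRightAdjoint_of_preservesLimits_of_isCoseparating (over_coseparator I) L

/-! ### Connected limits and a terminal object give all limits -/

section
variable {C D : Type*} [Category* C] [Category* D]

def extCone {K : Type*} [Category* K] {F : K ⥤ C} {T : C} (hT : IsTerminal T) (c : Cone F) :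
    Cone (WithTerminal.liftToTerminal F hT) where
  pt := c.pt
  π :=
    { app := fun X => match X with
        | .of k => c.π.app k
        | .star => hT.from _
      naturality := by
        rintro (_ | _) (_ | _) f
        · exact c.π.naturality (WithTerminal.down f)
        · exact hT.hom_ext _ _
        · exact f.elim
        · exact hT.hom_ext _ _ }

def resCone {K : Type*} [Category* K] {F : K ⥤ C} {T : C} (hT : IsTerminal T)
    (c : Cone (WithTerminal.liftToTerminal F hT)) : Cone F where
  pt := c.pt
  π :=
    { app := fun k => c.π.app (.of k)
      naturality := fun _ _ f => c.π.naturality (WithTerminal.incl.map f) }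

def extConeIsLimit {K : Type*} [Category* K] {F : K ⥤ C} {T : C} (hT : IsTerminal T) (c : Cone F)
    (hc : IsLimit c) : IsLimit (extCone hT c) where
  lift s := hc.lift (resCone hT s)
  fac s := by
    rintro (k | _)
    · exact hc.fac (resCone hT s) k
    · exact hT.hom_ext _ _
  uniq s m hm := hc.uniq (resCone hT s) m (fun k => hm (.of k))

theorem preserves_of_withTerminal {T : C} (hT : IsTerminal T) (G : C ⥤ D)
    (hG : IsTerminal (G.obj T)) (K : Type*) [Category* K]
    [PreservesLimitsOfShape (WithTerminal K) G] : PreservesLimitsOfShape K G where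
  preservesLimit {F} :=
    { preserves := fun {c} hc => ⟨by
        have h := isLimitOfPreserves G (extConeIsLimit hT c hc)
        let tr : ∀ s : Cone (F ⋙ G), Cone (WithTerminal.liftToTerminal F hT ⋙ G) := fun s =>
          { pt := s.pt
            π :=
              { app := fun X => match X with
                  | .of k => s.π.app k
                  | .star => hG.from _
                naturality := by
                  rintro (_ | _) (_ | _) f
                  · exact s.π.naturality (WithTerminal.down f)
                  · exact hG.hom_ext _ _
                  · exact f.elim
                  · exact hG.hom_ext _ _ } }
        exact
          { lift := fun s => h.lift (tr s)
            fac := fun s k => h.fac (tr s) (.of k)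
            uniq := fun s m hm => h.uniq (tr s) m (by
              rintro (k | _)
              · exact hm k
              · exact hG.hom_ext _ _) }⟩ }
end

/-! ### Polynomial functors -/

section
variable {I A D : Type u} (n : D ⟶ I) (d : D ⟶ A)

def E (a : A) : Over I := Over.mk (Y := {e : D // d e = a}) (↾ fun e => n e.1)

def Q : Over I ⥤ Over A where
  obj Y := Over.mk (Y := Σ a, (E n d a ⟶ Y)) (↾ fun p => p.1)
  map {Y Z} f := Over.homMk (↾ fun p : (Σ a, (E n d a ⟶ Y)) =>
    (⟨p.1, p.2 ≫ f⟩ : Σ a, (E n d a ⟶ Z))) (by ext; rfl)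
  map_id Y := by
    ext p
    exact Sigma.ext rfl (heq_of_eq (Category.comp_id _))
  map_comp f g := by
    ext p
    exact Sigma.ext rfl (heq_of_eq (Category.assoc _ _ _).symm)

variable {n d} in
theorem Q_ext {Y : Over I} {p q : Σ a, (E n d a ⟶ Y)} (h : p.1 = q.1)
    (h2 : ∀ (e : D) (h : d e = p.1) (h' : d e = q.1),
      p.2.left (⟨e, h⟩ : {e : D // d e = p.1}) = q.2.left (⟨e, h'⟩ : {e : D // d e = q.1})) :
    p = q := by
  obtain ⟨a, p⟩ := p
  obtain ⟨b, q⟩ := q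
  obtain rfl : a = b := h
  congr 1
  ext e
  exact h2 e.1 e.2 e.2

noncomputable def mkpb {X : Over A} (x : X.left) (e : D) (h : X.hom x = d e) :
    (pullback X.hom d : Type u) :=
  (Types.pullbackIsoPullback X.hom d).inv ⟨(x, e), h⟩

variable {d} in
@[simp] theorem fst_mkpb {X : Over A} (x : X.left) (e : D) (h : X.hom x = d e) :
    pullback.fst X.hom d (mkpb d x e h) = x :=
  ConcreteCategory.congr_hom (Types.pullbackIsoPullback_inv_fst X.hom d) ⟨(x, e), h⟩

variable {d} in
@[simp] theorem snd_mkpb {X : Over A} (x : X.left) (e : D) (h : X.hom x = d e) :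
    pullback.snd X.hom d (mkpb d x e h) = e :=
  ConcreteCategory.congr_hom (Types.pullbackIsoPullback_inv_snd X.hom d) ⟨(x, e), h⟩

theorem pb_ext {X : Over A} {p q : (pullback X.hom d : Type u)}
    (h1 : pullback.fst X.hom d p = pullback.fst X.hom d q)
    (h2 : pullback.snd X.hom d p = pullback.snd X.hom d q) : p = q :=
  PullbackCone.IsLimit.type_ext (pullbackIsPullback X.hom d) h1 h2

theorem pb_cond {X : Over A} (p : (pullback X.hom d : Type u)) :
    X.hom (pullback.fst X.hom d p) = d (pullback.snd X.hom d p) :=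
  ConcreteCategory.congr_hom (pullback.condition (f := X.hom) (g := d)) p

theorem over_w {X Y : Over A} (v : X ⟶ Y) (x : X.left) : Y.hom (v.left x) = X.hom x :=
  ConcreteCategory.congr_hom (Over.w v) x

noncomputable def toQ (X : Over A) (Y : Over I)
    (f : (Over.pullback d ⋙ Over.map n).obj X ⟶ Y) : X ⟶ (Q n d).obj Y :=
  Over.homMk (↾ fun x : X.left => (⟨X.hom x, Over.homMk (↾ fun e : {e : D // d e = X.hom x} =>
    f.left (mkpb d x e.1 e.2.symm)) (by
      ext e
      refine (over_w f _).trans ?_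
      exact congrArg n (snd_mkpb x e.1 e.2.symm))⟩ : Σ a, (E n d a ⟶ Y))) (by ext; rfl)

noncomputable def ofQ (X : Over A) (Y : Over I) (v : X ⟶ (Q n d).obj Y) :
    (Over.pullback d ⋙ Over.map n).obj X ⟶ Y :=
  Over.homMk (↾ fun p : (pullback X.hom d : Type u) =>
    (show Σ a, (E n d a ⟶ Y) from v.left (pullback.fst X.hom d p)).2.left
      (⟨pullback.snd X.hom d p, (pb_cond d p).symm.trans (over_w v _).symm⟩ :
        {e : D // d e = _})) (by
    ext p
    exact over_w (show Σ a, (E n d a ⟶ Y) from v.left (pullback.fst X.hom d p)).2 _)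

theorem Q_apply_congr {Y : Over I} {p q : Σ a, (E n d a ⟶ Y)} (h : p = q) {e e' : D} (he : e = e')
    (h1 : d e = p.1) (h2 : d e' = q.1) :
    p.2.left (⟨e, h1⟩ : {e : D // d e = p.1}) = q.2.left (⟨e', h2⟩ : {e : D // d e = q.1}) := by
  subst h; subst he; rfl

noncomputable def adjQ : Over.pullback d ⋙ Over.map n ⊣ Q n d :=
  Adjunction.mkOfHomEquiv
    { homEquiv := fun X Y =>
        { toFun := toQ n d X Y
          invFun := ofQ n d X Y
          left_inv := fun f => by
            ext p
            change f.left (mkpb d _ _ _) = f.left p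
            congr 1
            exact pb_ext d (by simp) (by simp)
          right_inv := fun v => by
            ext x
            refine Q_ext (over_w v x).symm ?_
            intro e h h'
            refine Q_apply_congr n d (congrArg _ (fst_mkpb x e _)) (snd_mkpb x e _) _ _ }
      homEquiv_naturality_left_symm := fun {X' X Y} f g => by
        ext p
        refine Q_apply_congr n d ?_ ?_ _ _
        · change g.left (f.left _) = g.left _
          congr 1
          exact (ConcreteCategory.congr_hom (pullback.lift_fst
            (f := X.hom) (g := d) (pullback.fst X'.hom d ≫ f.left) (pullback.snd X'.hom d) _) p).symm
        · exact (ConcreteCategory.congr_hom (pullback.lift_snd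
            (f := X.hom) (g := d) (pullback.fst X'.hom d ≫ f.left) (pullback.snd X'.hom d) _) p).symm
      homEquiv_naturality_right := fun {X Y Y'} f g => by
        ext x
        rfl }

noncomputable def adjPi : Over.pullback d ⊣ Q (𝟙 D) d :=
  (adjQ (𝟙 D) d).ofNatIsoLeft
    ((Over.pullback d).isoWhiskerLeft (Over.mapId D) ≪≫ (Over.pullback d).rightUnitor)

noncomputable def QIso : Q n d ≅ Over.pullback n ⋙ Q (𝟙 D) d :=
  (adjQ n d).rightAdjointUniq ((adjPi d).comp (Over.mapPullbackAdj n))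

end

/-! ### Right adjoints are of the form `Q` -/

section
variable {I A : Type u} {L : Over I ⥤ Over A} {F : Over A ⥤ Over I} (adj : F ⊣ L)

def pt (a : A) : Over A := Over.mk (Y := PUnit.{u+1}) (↾ fun _ => a)

variable (F) in
abbrev DD : Type u := Σ a : A, (F.obj (pt a)).left
variable (F) in
abbrev dd : DD F ⟶ A := ↾ fun p => p.1
variable (F) in
abbrev nn : DD F ⟶ I := ↾ fun p => (F.obj (pt p.1)).hom p.2

variable (F) in
def ptIso (a : A) : F.obj (pt a) ≅ E (nn F) (dd F) a :=
  Over.isoMk (Equiv.toIso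
    { toFun := fun x => (⟨⟨a, x⟩, rfl⟩ : {e : DD F // dd F e = a})
      invFun := fun e : {e : DD F // dd F e = a} => (show e.1.1 = a from e.2) ▸ e.1.2
      left_inv := fun x => rfl
      right_inv := by rintro ⟨⟨b, x⟩, h⟩; obtain rfl : b = a := h; rfl }) (by ext; rfl)

def ptEquiv (a : A) (Z : Over A) : (pt a ⟶ Z) ≃ {z : Z.left // Z.hom z = a} where
  toFun f := ⟨f.left PUnit.unit, over_w f _⟩
  invFun z := Over.homMk (↾ fun _ => z.1) (by ext; exact z.2)
  left_inv f := by ext; rfl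
  right_inv z := rfl

def elemEquiv (Y : Over I) (a : A) :
    (E (nn F) (dd F) a ⟶ Y) ≃ {z : (L.obj Y).left // (L.obj Y).hom z = a} :=
  ((ptIso F a).homCongr (Iso.refl Y)).symm.trans
    ((adj.homEquiv _ _).trans (ptEquiv a (L.obj Y)))

def elemTotal (Y : Over I) : (Σ a, (E (nn F) (dd F) a ⟶ Y)) ≃ (L.obj Y).left :=
  (Equiv.sigmaCongrRight (elemEquiv adj Y)).trans (Equiv.sigmaFiberEquiv (L.obj Y).hom)

def LIso : Q (nn F) (dd F) ≅ L :=
  NatIso.ofComponents (fun Y => Over.isoMk (elemTotal adj Y).toIso (by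
      ext p
      exact (elemEquiv adj Y p.1 p.2).2)) (by
    intro Y Z f
    ext p
    change (adj.homEquiv _ _ ((ptIso F p.1).hom ≫ (p.2 ≫ f) ≫ 𝟙 Z)).left PUnit.unit =
      (L.map f).left ((adj.homEquiv _ _ ((ptIso F p.1).hom ≫ p.2 ≫ 𝟙 Y)).left PUnit.unit)
    rw [Category.comp_id, Category.comp_id, ← Category.assoc, adj.homEquiv_naturality_right]
    rfl)
end

/-! ### Factoring through the value at the terminal object -/

section
variable {I J : Type u} (P : Over I ⥤ Over J)

def T (I : Type u) : Over I := Over.mk (𝟙 I)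
noncomputable def hT (I : Type u) : IsTerminal (T I) := Over.mkIdTerminal

noncomputable def fac : Over I ⥤ Over (P.obj (T I)).left where
  obj X := Over.mk (P.map ((hT I).from X)).left
  map {X Y} f := Over.homMk (P.map f).left (by
    change (P.map f).left ≫ (P.map ((hT I).from Y)).left = (P.map ((hT I).from X)).left
    rw [← Over.comp_left, ← P.map_comp]
    congr 2
    exact (hT I).hom_ext _ _)
  map_id X := by ext x; simp
  map_comp f g := by ext x; simp

noncomputable def facIso : P ≅ fac P ⋙ Over.map (P.obj (T I)).hom :=
  NatIso.ofComponents (fun X => Over.isoMk (Iso.refl _) (by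
    change 𝟙 _ ≫ (P.map ((hT I).from X)).left ≫ (P.obj (T I)).hom = _
    rw [Category.id_comp, Over.w])) (by intro X Y f; ext x; rfl)

noncomputable def facTerminal : IsTerminal ((fac P).obj (T I)) := by
  have h : (P.map ((hT I).from (T I))).left = 𝟙 _ := by
    rw [(hT I).hom_ext ((hT I).from (T I)) (𝟙 _), P.map_id]; rfl
  change IsTerminal (Over.mk (P.map ((hT I).from (T I))).left)
  rw [h]
  exact Over.mkIdTerminal

theorem fac_preserves (hP : ∀ (K : Type u) [SmallCategory K] [IsConnected K],
      PreservesLimitsOfShape K P) : PreservesLimits (fac P) where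
  preservesLimitsOfShape {K} _ := by
    have : IsConnected (WithTerminal K) := isConnected_of_hasTerminal _
    have := hP (WithTerminal K)
    have h : PreservesLimitsOfShape (WithTerminal K) (P ⋙ Over.forget J) := inferInstance
    have : PreservesLimitsOfShape (WithTerminal K)
      (fac P ⋙ Over.forget (P.obj (T I)).left) := h
    have := preservesLimitsOfShape_of_reflects_of_preserves (J := WithTerminal K)
      (fac P) (Over.forget (P.obj (T I)).left)
    exact preserves_of_withTerminal (hT I) (fac P) (facTerminal P) K
end

end PolyAux

/-- A functor between slice categories of `Type u` that preserves limits of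
every small connected shape is polynomial: it is naturally isomorphic to a
composite `Σ_a ∘ Π_d ∘ Δ_n` for some maps `n : D → I`, `d : D → A`,
`a : A → J`, where `Π` is a right adjoint of `Δ_d = Over.pullback d`. -/
theorem polynomial_of_preserves_connected_limits
    {I J : Type u} (P : Over I ⥤ Over J)
    (hP : ∀ (K : Type u) [SmallCategory K] [IsConnected K],
      PreservesLimitsOfShape K P) :
    ∃ (D A : Type u) (n : D ⟶ I) (d : D ⟶ A) (a : A ⟶ J),
      Nonempty (Σ (Pi : Over D ⥤ Over A),
        (Over.pullback d ⊣ Pi) ×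
        (P ≅ Over.pullback n ⋙ Pi ⋙ Over.map a)) := by
  have := PolyAux.fac_preserves P hP
  have := PolyAux.over_isRightAdjoint (PolyAux.fac P)
  let F := (PolyAux.fac P).leftAdjoint
  let adj : F ⊣ PolyAux.fac P := Adjunction.ofIsRightAdjoint _
  refine ⟨PolyAux.DD F, _, PolyAux.nn F, PolyAux.dd F, (P.obj (PolyAux.T I)).hom,
    ⟨PolyAux.Q (𝟙 _) (PolyAux.dd F), PolyAux.adjPi _, ?_⟩⟩
  exact PolyAux.facIso P ≪≫ Functor.isoWhiskerRight
    ((PolyAux.LIso adj).symm ≪≫ PolyAux.QIso _ _) _ ≪≫ Functor.associator _ _ _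
end

section
/- Let P₁, P₂, P₃ be three games in Set, with state types I₁, I₂, I₃, move families A₁, A₂, A₃, counter-move families D₁, D₂, D₃ and next-state functions n₁, n₂, n₃. Let R : I₁ → I₂ → I₃ → Type be a family (a span from I₁ to I₂ × I₃), and fix states i₁ : I₁, i₂ : I₂, i₃ : I₃. Then there is an equivalence of types between (∀ (a₁ : A₁ i₁) (a₂ : A₂ i₂), Σ (a₃ : A₃ i₃), ∀ (d₃ : D₃ i₃ a₃), Σ (d₁ : D₁ i₁ a₁) (d₂ : D₂ i₂ a₂), R (n₁ i₁ a₁ d₁) (n₂ i₂ a₂ d₂) (n₃ i₃ a₃ d₃)) and (∀ (a₁ : A₁ i₁), Σ (f : A₂ i₂ → A₃ i₃) (φ : ∀ a₂, D₃ i₃ (f a₂) → D₂ i₂ a₂), ∀ (a₂ : A₂ i₂) (d₃ : D₃ i₃ (f a₂)), Σ (d₁ : D₁ i₁ a₁), R (n₁ i₁ a₁ d₁) (n₂ i₂ a₂ (φ a₂ d₃)) (n₃ i₃ (f a₂) d₃)). This is the hom-set isomorphism exhibiting P₂ ⊸ P₃ as right adjoint to − ⊗ P₂: the first type expresses that R is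 a simulation from P₁ ⊗ P₂ to P₃ at these states, the second that R is a simulation from P₁ to P₂ ⊸ P₃. -/
universe u

/-- Hom-set isomorphism exhibiting `P₂ ⊸ P₃` as right adjoint to `− ⊗ P₂`:
at fixed states, simulation data for `R` from `P₁ ⊗ P₂` to `P₃` is equivalent
to simulation data for `R` from `P₁` to `P₂ ⊸ P₃`. -/
theorem tensor_linear_adjunction
    {I₁ I₂ I₃ : Type u}
    (A₁ : I₁ → Type u) (A₂ : I₂ → Type u) (A₃ : I₃ → Type u)
    (D₁ : ∀ i, A₁ i → Type u) (D₂ : ∀ i, A₂ i → Type u) (D₃ : ∀ i, A₃ i → Type u)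
    (n₁ : ∀ i a, D₁ i a → I₁) (n₂ : ∀ i a, D₂ i a → I₂) (n₃ : ∀ i a, D₃ i a → I₃)
    (R : I₁ → I₂ → I₃ → Type u) (i₁ : I₁) (i₂ : I₂) (i₃ : I₃) :
    Nonempty (
      (∀ (a₁ : A₁ i₁) (a₂ : A₂ i₂), Σ (a₃ : A₃ i₃), ∀ (d₃ : D₃ i₃ a₃),
        Σ (d₁ : D₁ i₁ a₁) (d₂ : D₂ i₂ a₂),
          R (n₁ i₁ a₁ d₁) (n₂ i₂ a₂ d₂) (n₃ i₃ a₃ d₃))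
      ≃
      (∀ (a₁ : A₁ i₁), Σ (f : A₂ i₂ → A₃ i₃)
          (φ : ∀ a₂, D₃ i₃ (f a₂) → D₂ i₂ a₂),
        ∀ (a₂ : A₂ i₂) (d₃ : D₃ i₃ (f a₂)),
          Σ (d₁ : D₁ i₁ a₁),
            R (n₁ i₁ a₁ d₁) (n₂ i₂ a₂ (φ a₂ d₃)) (n₃ i₃ (f a₂) d₃))) := by
  exact ⟨{
    toFun := fun h a₁ =>
      ⟨fun a₂ => (h a₁ a₂).1, fun a₂ d₃ => ((h a₁ a₂).2 d₃).2.1,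
        fun a₂ d₃ => ⟨((h a₁ a₂).2 d₃).1, ((h a₁ a₂).2 d₃).2.2⟩⟩
    invFun := fun g a₁ a₂ =>
      ⟨(g a₁).1 a₂, fun d₃ =>
        ⟨((g a₁).2.2 a₂ d₃).1, (g a₁).2.1 a₂ d₃, ((g a₁).2.2 a₂ d₃).2⟩⟩
    left_inv := fun _ => rfl
    right_inv := fun _ => rfl }⟩
end

section
/- Let k be a natural number, U and V types, and f : V → U a function. Suppose h : (Fin k → U) → (Fin k → U) sends every tuple to a permutation of itself, i.e. for every u : Fin k → U there exists σ : Equiv.Perm (Fin k) with h u = u ∘ σ. Then there exists ρ : (Fin k → V) → (Fin k → V) such that: (1) every tuple is sent to a permutation of itself, i.e. for every v there exists σ with ρ v = v ∘ σ; (2) the square commutes: for every v : Fin k → V, f ∘ (ρ v) = h (f ∘ v); and (3) the square is a pullback: for every pair (u : Fin k → U, v : Fin k → V) with h u = f ∘ v, there exists a unique w : Fin k → V such that f ∘ w = u and ρ w = v. -/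
universe u v

/-- If `h : U^k → U^k` sends every tuple to a permutation of itself, then for
any `f : V → U` there is `ρ : V^k → V^k` sending every tuple to a permutation
of itself, making the square with `f^k` (post-composition with `f`) and `h`
commute, and making that square a pullback. -/
theorem lift_permutation_action_pullback
    (k : ℕ) (U : Type u) (V : Type v) (f : V → U)
    (h : (Fin k → U) → (Fin k → U))
    (hperm : ∀ u : Fin k → U, ∃ σ : Equiv.Perm (Fin k), h u = u ∘ σ) :
    ∃ ρ : (Fin k → V) → (Fin k → V),
      (∀ v : Fin k → V, ∃ σ : Equiv.Perm (Fin k), ρ v = v ∘ σ) ∧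
      (∀ v : Fin k → V, f ∘ ρ v = h (f ∘ v)) ∧
      (∀ (u : Fin k → U) (v : Fin k → V), h u = f ∘ v →
        ∃! w : Fin k → V, f ∘ w = u ∧ ρ w = v) := by
  choose σ hσ using hperm
  refine ⟨fun v => v ∘ σ (f ∘ v), fun v => ⟨_, rfl⟩, fun v => (hσ (f ∘ v)).symm, ?_⟩
  intro u v huv
  have hw : f ∘ (v ∘ (σ u).symm) = u := by
    rw [← Function.comp_assoc, ← huv, hσ u]
    funext i
    simp
  refine ⟨v ∘ (σ u).symm, ⟨hw, ?_⟩, ?_⟩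
  · change (v ∘ (σ u).symm) ∘ σ (f ∘ (v ∘ (σ u).symm)) = v
    rw [hw]
    funext i
    simp
  · rintro w ⟨h1, h2⟩
    subst h1
    funext i
    rw [← h2]
    simp
end

section
/- Let k be a natural number and I, J, R types, with functions f : R → (Fin k → I) and j : R → J. Let s : (Fin k → I) → (Fin k → I) be a choice of representatives up to permutation, i.e. a function such that Multiset.ofFn (s i) = Multiset.ofFn i for every i, and s i = s i' whenever Multiset.ofFn i = Multiset.ofFn i'. Assume the span (f, j) coequalizes all symmetries: for every permutation σ : Equiv.Perm (Fin k) there exists a bijection H : R ≃ R such that f (H r) = (f r) ∘ σ and j (H r) = j r for all r : R. Then there is a bijection ε from R to the set R' = {(i, r) : (Fin k → I) × R | s i = f r} such that for every r : R, the first component of ε r equals f r and j applied to the second component of ε r equals j r. -/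
universe u v

/-- If a span `(f, j)` from `I^k` to `J` coequalizes all the symmetries on
`I^k`, then `R` is in bijection with `R' = {(i, r) | s i = f r}` (where `s`
chooses representatives of tuples up to permutation), compatibly with both
legs of the span. -/
theorem span_coequalizes_symmetries_bijection
    (k : ℕ) (I : Type u) (J : Type v) (R : Type u)
    (f : R → (Fin k → I)) (j : R → J)
    (s : (Fin k → I) → (Fin k → I))
    (hs₁ : ∀ i : Fin k → I, (List.ofFn (s i) : Multiset I) = (List.ofFn i : Multiset I))
    (hs₂ : ∀ i i' : Fin k → I,
      (List.ofFn i : Multiset I) = (List.ofFn i' : Multiset I) → s i = s i')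
    (hcoeq : ∀ σ : Equiv.Perm (Fin k), ∃ H : R ≃ R,
      ∀ r : R, f (H r) = f r ∘ σ ∧ j (H r) = j r) :
    ∃ ε : R ≃ {p : (Fin k → I) × R // s p.1 = f p.2},
      ∀ r : R, ((ε r : (Fin k → I) × R).1 = f r) ∧
        j ((ε r : (Fin k → I) × R).2) = j r := by
  have hσ : ∀ i : Fin k → I, ∃ σ : Equiv.Perm (Fin k), s i = i ∘ σ := by
    intro i
    classical
    have hp : (List.ofFn (s i)).Perm (List.ofFn i) := Multiset.coe_eq_coe.1 (hs₁ i)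
    let e : Fin (List.ofFn (s i)).length ≃ Fin (List.ofFn i).length :=
      ⟨hp.idxBij, hp.symm.idxBij, hp.idxBij_symm_leftInverse_idxBij,
        hp.idxBij_symm_rightInverse_idxBij⟩
    refine ⟨((finCongr (List.length_ofFn (f := s i))).symm.trans e).trans
      (finCongr (List.length_ofFn (f := i))), ?_⟩
    funext x
    have h := hp.getElem_idxBij_eq_getElem
      (i := (finCongr (List.length_ofFn (f := s i))).symm x)
    simp only [List.getElem_ofFn] at h
    exact h.symm
  choose σ hσ using hσ
  choose H hH using hcoeq
  have key : ∀ p : {p : (Fin k → I) × R // s p.1 = f p.2},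
      f ((H (σ p.1.1)).symm p.1.2) = p.1.1 := by
    rintro ⟨⟨i, r⟩, h⟩
    have h1 := (hH (σ i) ((H (σ i)).symm r)).1
    rw [Equiv.apply_symm_apply, ← (show s i = f r from h), hσ i] at h1
    exact ((σ i).surjective.injective_comp_right h1).symm
  refine ⟨⟨fun r => ⟨(f r, H (σ (f r)) r), ?_⟩, fun p => (H (σ p.1.1)).symm p.1.2, ?_, ?_⟩, ?_⟩
  · exact (hσ (f r)).trans (hH _ r).1.symm
  · intro r
    simp
  · intro p
    apply Subtype.ext
    apply Prod.ext
    · exact key p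
    · simp only [key p, Equiv.apply_symm_apply]
  · intro r
    exact ⟨rfl, (hH _ r).2⟩
end
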